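/- Suppose F is ε-approximately k-submodular with respect to f, let B₁,…,B_k ≥ 1 be individual size budgets with B = B₁+⋯+B_k ≤ |V|, and let x⁽⁰⁾ = 𝟎, x⁽¹⁾, …, x⁽ᴮ⁾ be a greedy IS sequence for F with these budgets. Then F(x⁽ᴮ⁾) ≥ [(1−ε)² / ((3−3ε+2εB)(1+ε))]·F(o) for every k-state o with |supp_i(o)| ≤ B_i for all i ∈ {1,…,k}. (This is the approximation ratio of algorithm k-Greedy-IS applied to an ε-AS function under the individual size constraints.) -/

import Mathlib

/-!
Put `M = f (x B)`. Since `F` is within a factor `1 ± ε` of `f`, greediness of the `j`-th step says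
that every admissible pair `(e, i)` satisfies `Δ_{e,i} f (x (j-1)) ≤ (f (x j) - f (x (j-1))) + D`,
where `D = 2ε/(1-ε) * M` (`greedy_marg_le`).

The optimum `o` is transformed step by step into `x B` through feasible states `y j ⪰ x j`. At
step `j` the greedy element `e` is deleted from `y (j-1)`; if colour class `i` is then still full,
one further element of that class lying outside `x (j-1)` is deleted too; finally `(e, i)` is added,
which by monotonicity only helps (`exchange_step`). By diminishing returns each deletion costs at
most a marginal gain at `x (j-1)`, hence at most the greedy gain plus `D` (`delete_loss`).

There are at most two deletions per step, so the greedy gains telescope to at most `2 M`. A deleted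
element is never put back unless it is the greedy choice, so deletions decrease
`|supp (y j) \ supp (x j)|`, which is at most `B` initially. The error `D` is therefore paid at most
`B` times rather than `2 B` times, which is what yields `2εB` in the denominator. As `y B = x B`,
this gives `f o ≤ 3 M + B * D`, which is the claim after passing back from `f` to `F`.
-/

/-- The support of a `k`-state: elements assigned a nonzero value. -/
def supp {V : Type*} [Fintype V] {k : ℕ} [DecidableEq V] (x : V → Fin (k+1)) : Finset V :=
  Finset.univ.filter (fun e => x e ≠ 0)

/-- The `i`-th support of a `k`-state: elements assigned value `i`. -/
def suppi {V : Type*} [Fintype V] {k : ℕ} [DecidableEq V] (x : V → Fin (k+1)) (i : Fin (k+1)) :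
    Finset V :=
  Finset.univ.filter (fun e => x e = i)

/-- The partial order on `k`-states: `y` agrees with `x` on the support of `x`. -/
def kle {V : Type*} {k : ℕ} (x y : V → Fin (k+1)) : Prop :=
  ∀ e, x e ≠ 0 → y e = x e

/-- `kadd x e i` is the `k`-state agreeing with `x` except that `e` is assigned `i`. -/
def kadd {V : Type*} [DecidableEq V] {k : ℕ} (x : V → Fin (k+1)) (e : V) (i : Fin (k+1)) :
    V → Fin (k+1) :=
  Function.update x e i

/-- The marginal gain `Δ_{e,i} g (x) = g(x + (e,i)) - g(x)`. -/
def marg {V : Type*} [DecidableEq V] {k : ℕ} (g : (V → Fin (k+1)) → ℝ) (e : V)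
    (i : Fin (k+1)) (x : V → Fin (k+1)) : ℝ :=
  g (kadd x e i) - g x

/-- `f` is monotone and satisfies the diminishing returns property (monotone k-submodular). -/
def KSubmodular {V : Type*} [Fintype V] [DecidableEq V] {k : ℕ}
    (f : (V → Fin (k+1)) → ℝ) : Prop :=
  (∀ x y : V → Fin (k+1), kle x y → f x ≤ f y) ∧
  (∀ x y : V → Fin (k+1), kle x y → ∀ e, e ∉ supp y → ∀ i : Fin (k+1), i ≠ 0 →
    marg f e i x ≥ marg f e i y)

/-- `F` is ε-approximately k-submodular (ε-AS) with respect to `f`. -/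
def EpsAS {V : Type*} [Fintype V] [DecidableEq V] {k : ℕ} (ε : ℝ)
    (F f : (V → Fin (k+1)) → ℝ) : Prop :=
  (∀ x, 0 ≤ f x) ∧ KSubmodular f ∧ f (fun _ => (0 : Fin (k+1))) = 0 ∧
  (∀ x : V → Fin (k+1), (1 - ε) * f x ≤ F x ∧ F x ≤ (1 + ε) * f x)

/-- `F` is ε-approximately diminishing returns (ε-ADR) with respect to `f`. -/
def EpsADR {V : Type*} [Fintype V] [DecidableEq V] {k : ℕ} (ε : ℝ)
    (F f : (V → Fin (k+1)) → ℝ) : Prop :=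
  (∀ x, 0 ≤ f x) ∧ KSubmodular f ∧ f (fun _ => (0 : Fin (k+1))) = 0 ∧
  (∀ x : V → Fin (k+1), ∀ e, e ∉ supp x → ∀ i : Fin (k+1), i ≠ 0 →
    (1 - ε) * marg f e i x ≤ marg F e i x ∧ marg F e i x ≤ (1 + ε) * marg f e i x)

/-- A greedy TS sequence of length `B` for `G` (run of k-Greedy-TS on `G` with budget `B`). -/
def GreedyTS {V : Type*} [Fintype V] [DecidableEq V] {k : ℕ}
    (G : (V → Fin (k+1)) → ℝ) (B : ℕ) (x : ℕ → V → Fin (k+1))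
    (es : ℕ → V) (is : ℕ → Fin (k+1)) : Prop :=
  x 0 = (fun _ => (0 : Fin (k+1))) ∧
  ∀ j, 1 ≤ j → j ≤ B →
    es j ∉ supp (x (j-1)) ∧ is j ≠ 0 ∧
    x j = kadd (x (j-1)) (es j) (is j) ∧
    (∀ e, e ∉ supp (x (j-1)) → ∀ i : Fin (k+1), i ≠ 0 →
      marg G (es j) (is j) (x (j-1)) ≥ marg G e i (x (j-1)))

/-- A greedy IS sequence for `G` with individual budgets `Bv` (run of k-Greedy-IS on `G`). -/
def GreedyIS {V : Type*} [Fintype V] [DecidableEq V] {k : ℕ}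
    (G : (V → Fin (k+1)) → ℝ) (Bv : Fin (k+1) → ℕ) (B : ℕ) (x : ℕ → V → Fin (k+1))
    (es : ℕ → V) (is : ℕ → Fin (k+1)) : Prop :=
  x 0 = (fun _ => (0 : Fin (k+1))) ∧
  ∀ j, 1 ≤ j → j ≤ B →
    es j ∉ supp (x (j-1)) ∧ is j ≠ 0 ∧
    (suppi (x (j-1)) (is j)).card < Bv (is j) ∧
    x j = kadd (x (j-1)) (es j) (is j) ∧
    (∀ e, e ∉ supp (x (j-1)) → ∀ i : Fin (k+1), i ≠ 0 →
      (suppi (x (j-1)) i).card < Bv i →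
      marg G (es j) (is j) (x (j-1)) ≥ marg G e i (x (j-1)))

section Exchange

variable {V : Type*} [DecidableEq V] {k : ℕ}

lemma kle_delete {x y : V → Fin (k+1)} (hxy : kle x y) {e : V} (hx : x e = 0) :
    kle x (Function.update y e 0) := by
  intro d hd
  have : d ≠ e := fun h => hd (h ▸ hx)
  rw [Function.update_of_ne this]
  exact hxy d hd

lemma kle_kadd {y : V → Fin (k+1)} {e : V} (hy : y e = 0) (i : Fin (k+1)) :
    kle y (kadd y e i) := by
  intro d hd
  have : d ≠ e := fun h => hd (h ▸ hy)
  rw [kadd, Function.update_of_ne this]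

variable [Fintype V]

lemma mem_supp_iff (x : V → Fin (k+1)) (e : V) : e ∈ supp x ↔ x e ≠ 0 := by simp [supp]

lemma mem_suppi_iff (x : V → Fin (k+1)) (i : Fin (k+1)) (e : V) : e ∈ suppi x i ↔ x e = i := by
  simp [suppi]

/-- A `k`-state respects the individual size budgets `Bv`. -/
def Feasible (Bv : Fin (k+1) → ℕ) (y : V → Fin (k+1)) : Prop :=
  ∀ i : Fin (k+1), i ≠ 0 → (suppi y i).card ≤ Bv i

lemma card_suppi_lt {x y : V → Fin (k+1)} (hxy : kle x y) {e : V} (hx : x e = 0)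
    (hy : y e ≠ 0) : (suppi x (y e)).card < (suppi y (y e)).card := by
  apply Finset.card_lt_card
  rw [Finset.ssubset_iff_of_subset]
  · exact ⟨e, by simp [mem_suppi_iff], by simp [mem_suppi_iff, hx, Ne.symm hy]⟩
  · intro d hd
    rw [mem_suppi_iff] at hd ⊢
    rw [← hd]
    exact hxy d (by rw [hd]; exact hy)

lemma suppi_delete {y : V → Fin (k+1)} (e : V) {i : Fin (k+1)} (hi : i ≠ 0) :
    suppi (Function.update y e 0) i = (suppi y i).erase e := by
  ext d
  rw [Finset.mem_erase, mem_suppi_iff, mem_suppi_iff]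
  by_cases h : d = e
  · subst h; simp [hi.symm]
  · simp [h]

lemma feasible_delete {Bv : Fin (k+1) → ℕ} {y : V → Fin (k+1)} (hy : Feasible Bv y) (e : V) :
    Feasible Bv (Function.update y e 0) := by
  intro i hi
  rw [suppi_delete e hi]
  exact (Finset.card_erase_le).trans (hy i hi)

lemma supp_delete (y : V → Fin (k+1)) (e : V) :
    supp (Function.update y e 0) = (supp y).erase e := by
  ext d
  rw [Finset.mem_erase, mem_supp_iff, mem_supp_iff]
  by_cases h : d = e
  · subst h; simp
  · simp [h]

lemma supp_kadd (y : V → Fin (k+1)) (e : V) {i : Fin (k+1)} (hi : i ≠ 0) :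
    supp (kadd y e i) = insert e (supp y) := by
  ext d
  rw [Finset.mem_insert, mem_supp_iff, mem_supp_iff, kadd]
  by_cases h : d = e
  · subst h; simp [hi]
  · simp [h]

/-- Deleting an element outside `supp x` from a feasible `y ⪰ x` costs at most `g`, plus `D` if
the element was actually present; presence is counted by the drop of `|supp y \ supp x|`. -/
lemma delete_loss {f : (V → Fin (k+1)) → ℝ} (hf : KSubmodular f) {Bv : Fin (k+1) → ℕ}
    {x y : V → Fin (k+1)} {g D : ℝ} (hg : 0 ≤ g)
    (hmarg : ∀ e, e ∉ supp x → ∀ i : Fin (k+1), i ≠ 0 → (suppi x i).card < Bv i →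
      marg f e i x ≤ g + D)
    (hxy : kle x y) (hy : Feasible Bv y) {e : V} (hx : x e = 0) :
    f y + ((supp (Function.update y e 0) \ supp x).card : ℝ) * D
      ≤ f (Function.update y e 0) + g + ((supp y \ supp x).card : ℝ) * D := by
  by_cases h : y e = 0
  · have : Function.update y e 0 = y := by rw [← h]; simp
    rw [this]; linarith
  · have hex : e ∉ supp x := by simp [mem_supp_iff, hx]
    have h1 := hf.2 x _ (kle_delete hxy hx) e (by simp [mem_supp_iff]) (y e) h
    have h2 := hmarg e hex (y e) h ((card_suppi_lt hxy hx h).trans_le (hy _ h))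
    have h3 : marg f e (y e) (Function.update y e 0) = f y - f (Function.update y e 0) := by
      simp [marg, kadd]
    have h4 : (supp (Function.update y e 0) \ supp x).card + 1 = (supp y \ supp x).card := by
      rw [supp_delete, Finset.erase_sdiff_comm]
      exact Finset.card_erase_add_one (by simp [mem_supp_iff, hx, h])
    rw [← h4]
    push_cast
    linarith

/-- When an admissible pair `(e, a)` is added to `x`, a feasible `y ⪰ x` can be turned into a
feasible `z ⪰ x + (e, a)` by at most two deletions and the addition of `(e, a)`. The loss is at most
`g` per deletion, plus `D` for each element that leaves `supp y \ supp x`. -/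
lemma exchange_step {f : (V → Fin (k+1)) → ℝ} (hf : KSubmodular f) {Bv : Fin (k+1) → ℕ}
    {x y : V → Fin (k+1)} {g D : ℝ} (hg : 0 ≤ g)
    (hmarg : ∀ e, e ∉ supp x → ∀ i : Fin (k+1), i ≠ 0 → (suppi x i).card < Bv i →
      marg f e i x ≤ g + D)
    (hxy : kle x y) (hy : Feasible Bv y) {e : V} {a : Fin (k+1)} (hx : x e = 0) (ha : a ≠ 0)
    (hcard : (suppi x a).card < Bv a) :
    ∃ z, kle (kadd x e a) z ∧ Feasible Bv z ∧
      f y + ((supp z \ supp (kadd x e a)).card : ℝ) * D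
        ≤ f z + 2 * g + ((supp y \ supp x).card : ℝ) * D := by
  -- After the deletions, `w` misses `e` and has room left in colour class `a`.
  obtain ⟨w, hxw, hw, hwe, hwa, hloss⟩ : ∃ w, kle x w ∧ Feasible Bv w ∧ w e = 0 ∧
      (suppi w a).card < Bv a ∧
      f y + ((supp w \ supp x).card : ℝ) * D
        ≤ f w + 2 * g + ((supp y \ supp x).card : ℝ) * D := by
    have hxu := kle_delete hxy hx
    have hu := feasible_delete hy e
    have hl := delete_loss hf hg hmarg hxy hy hx
    have hue : Function.update y e 0 e = 0 := by simp
    generalize Function.update y e 0 = u at *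
    by_cases hua : (suppi u a).card < Bv a
    · exact ⟨u, hxu, hu, hue, hua, by linarith⟩
    · obtain ⟨d, hd, hdx⟩ := Finset.exists_mem_notMem_of_card_lt_card
        (hcard.trans_le (not_lt.1 hua))
      rw [mem_suppi_iff] at hd hdx
      have hxd : x d = 0 := by
        by_contra h
        exact hdx ((hxu d h).symm.trans hd)
      refine ⟨Function.update u d 0, kle_delete hxu hxd, feasible_delete hu d, ?_, ?_, ?_⟩
      · by_cases h : e = d
        · subst h; simp
        · simp [h, hue]
      · rw [suppi_delete d ha]
        exact (Finset.card_erase_lt_of_mem ((mem_suppi_iff u a d).2 hd)).trans_le (hu a ha)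
      · have := delete_loss hf hg hmarg hxu hu hxd
        linarith
  refine ⟨kadd w e a, ?_, ?_, ?_⟩
  · intro d hd
    by_cases h : d = e
    · subst h; simp [kadd]
    · simp only [kadd, Function.update_of_ne h] at hd ⊢
      exact hxw d hd
  · intro i hi
    by_cases h : i = a
    · subst h
      have : suppi (kadd w e i) i ⊆ insert e (suppi w i) := by
        intro d hd
        rw [Finset.mem_insert, mem_suppi_iff]
        rw [mem_suppi_iff, kadd] at hd
        by_cases h : d = e
        · exact Or.inl h
        · rw [Function.update_of_ne h] at hd; exact Or.inr hd
      exact (Finset.card_le_card this).trans ((Finset.card_insert_le _ _).trans hwa)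
    · have : suppi (kadd w e a) i ⊆ suppi w i := by
        intro d hd
        rw [mem_suppi_iff, kadd] at hd
        rw [mem_suppi_iff]
        by_cases h' : d = e
        · subst h'; simp at hd; exact absurd hd.symm h
        · rwa [Function.update_of_ne h'] at hd
      exact (Finset.card_le_card this).trans (hw i hi)
  · have hmono := hf.1 _ _ (kle_kadd hwe a)
    have hs : supp (kadd w e a) \ supp (kadd x e a) = supp w \ supp x := by
      rw [supp_kadd _ _ ha, supp_kadd _ _ ha]
      ext d
      by_cases h : d = e
      · subst h; simp [mem_supp_iff, hwe]
      · simp [h]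
    rw [hs]
    linarith

/-- Transfer of the greedy inequality from `F` to `f`, with additive error `D = 2ε/(1-ε) * M`
for any upper bound `M` on `f` at the state reached. -/
lemma greedy_marg_le {ε : ℝ} (hε0 : 0 < ε) (hε1 : ε < 1) {F f : (V → Fin (k+1)) → ℝ}
    (hAS : EpsAS ε F f) {x x' : V → Fin (k+1)} {e : V} {i : Fin (k+1)} {M : ℝ}
    (hM : f x' ≤ M) (hgr : F (kadd x e i) ≤ F x') :
    marg f e i x ≤ (f x' - f x) + 2 * ε / (1 - ε) * M := by
  have h1 := (hAS.2.2.2 (kadd x e i)).1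
  have h2 := (hAS.2.2.2 x').2
  have hpos : 0 < 1 - ε := by linarith
  have hD : (1 - ε) * (2 * ε / (1 - ε) * M) = 2 * ε * M := by field_simp
  have h3 : 2 * ε * f x' ≤ 2 * ε * M := mul_le_mul_of_nonneg_left hM (by linarith)
  refine le_of_mul_le_mul_left ?_ hpos
  rw [mul_add, hD, marg]
  linarith

lemma card_supp_le_of_feasible {Bv : Fin (k+1) → ℕ} {y : V → Fin (k+1)} (hy : Feasible Bv y) :
    (supp y).card ≤ ∑ i ∈ Finset.univ.erase (0 : Fin (k+1)), Bv i := by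
  have hm : ∀ e ∈ supp y, y e ∈ Finset.univ.erase (0 : Fin (k+1)) := by
    intro e he
    simpa [mem_supp_iff] using he
  rw [Finset.card_eq_sum_card_fiberwise hm]
  apply Finset.sum_le_sum
  intro i hi
  refine le_trans (Finset.card_le_card ?_) (hy i (Finset.ne_of_mem_erase hi))
  intro e he
  rw [mem_suppi_iff]
  exact (Finset.mem_filter.1 he).2

lemma eq_of_kle_of_card_le {x y : V → Fin (k+1)} (hxy : kle x y)
    (h : (supp y).card ≤ (supp x).card) : y = x := by
  have hsub : supp x ⊆ supp y := by
    intro e he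
    rw [mem_supp_iff] at he ⊢
    rwa [hxy e he]
  have hs := Finset.eq_of_subset_of_card_le hsub h
  funext e
  by_cases he : x e = 0
  · have : e ∉ supp y := by simp [← hs, mem_supp_iff, he]
    rw [mem_supp_iff, not_not] at this
    rw [this, he]
  · exact hxy e he

end Exchange

/-- approximation ratio of k-Greedy-IS applied to an ε-AS function `F`. -/
theorem stmt8 {V : Type*} [Fintype V] [DecidableEq V] {k : ℕ} (hk : 1 ≤ k)
    (ε : ℝ) (hε0 : 0 < ε) (hε1 : ε < 1)
    (F f : (V → Fin (k+1)) → ℝ)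
    (hAS : EpsAS ε F f)
    (Bv : Fin (k+1) → ℕ) (hBv : ∀ i : Fin (k+1), i ≠ 0 → 1 ≤ Bv i)
    (B : ℕ) (hBdef : B = ∑ i ∈ Finset.univ.erase (0 : Fin (k+1)), Bv i)
    (hB : B ≤ Fintype.card V)
    (x : ℕ → V → Fin (k+1)) (es : ℕ → V) (is : ℕ → Fin (k+1))
    (hgr : GreedyIS F Bv B x es is) :
    ∀ o : V → Fin (k+1), (∀ i : Fin (k+1), i ≠ 0 → (suppi o i).card ≤ Bv i) →
      F (x B) ≥ ((1 - ε)^2 / ((3 - 3*ε + 2*ε*(B : ℝ)) * (1 + ε))) * F o := by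
  intro o ho
  have hpos : 0 < 1 - ε := by linarith
  obtain ⟨hx0, hstep⟩ := hgr
  have hf := hAS.2.1
  have hempty : ∀ j, j + 1 ≤ B → x j (es (j+1)) = 0 := by
    intro j hj
    have := (hstep (j+1) (by omega) hj).1
    simpa [mem_supp_iff] using this
  have hsucc : ∀ j, j + 1 ≤ B → x (j+1) = kadd (x j) (es (j+1)) (is (j+1)) := fun j hj =>
    (hstep (j+1) (by omega) hj).2.2.2.1
  have hfmono : ∀ j, j + 1 ≤ B → f (x j) ≤ f (x (j+1)) := by
    intro j hj
    rw [hsucc j hj]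
    exact hf.1 _ _ (kle_kadd (hempty j hj) _)
  have hM : ∀ j, j ≤ B → f (x j) ≤ f (x B) := fun j hj =>
    Nat.decreasingInduction' (P := fun j => f (x j) ≤ f (x B))
      (fun i hi _ ih => (hfmono i hi).trans ih) hj le_rfl
  have hcardx : ∀ j, j ≤ B → (supp (x j)).card = j := by
    intro j
    induction j with
    | zero => intro _; simp [hx0, supp]
    | succ j ih =>
      intro hj
      have h := hstep (j+1) (by omega) hj
      rw [hsucc j hj, supp_kadd _ _ h.2.1, Finset.card_insert_of_notMem (by simpa using h.1), ih (by omega)]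
  set M := f (x B) with hMdef
  have hM0 : 0 ≤ M := hAS.1 _
  set D := 2 * ε / (1 - ε) * M with hD
  have hD0 : 0 ≤ D := by positivity
  have key : ∀ j, j ≤ B → ∃ y, kle (x j) y ∧ Feasible Bv y ∧
      f o + ((supp y \ supp (x j)).card : ℝ) * D ≤ f y + 2 * f (x j) + (B : ℝ) * D := by
    intro j
    induction j with
    | zero =>
      intro _
      refine ⟨o, fun e he => absurd (by rw [hx0]) he, ho, ?_⟩
      have h1 : (supp o \ supp (x 0)).card ≤ B :=
        (Finset.card_le_card Finset.sdiff_subset).trans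
          (hBdef ▸ card_supp_le_of_feasible (Bv := Bv) ho)
      have h2 : ((supp o \ supp (x 0)).card : ℝ) * D ≤ B * D :=
        mul_le_mul_of_nonneg_right (by exact_mod_cast h1) hD0
      have h3 := hAS.1 (x 0)
      linarith
    | succ j ih =>
      intro hj
      obtain ⟨y, hxy, hy, hle⟩ := ih (by omega)
      obtain ⟨-, hi, hcard, -, hmax⟩ := hstep (j+1) (by omega) hj
      simp only [Nat.add_sub_cancel] at hcard hmax
      have hmarg : ∀ e, e ∉ supp (x j) → ∀ i : Fin (k+1), i ≠ 0 →
          (suppi (x j) i).card < Bv i → marg f e i (x j) ≤ (f (x (j+1)) - f (x j)) + D := by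
        intro e he i hi' hc
        apply greedy_marg_le hε0 hε1 hAS (hM _ hj)
        have := hmax e he i hi' hc
        rw [marg, marg, ← hsucc j hj] at this
        linarith
      obtain ⟨z, hz1, hz2, hz3⟩ := exchange_step hf (sub_nonneg.2 (hfmono j hj)) hmarg hxy hy
        (hempty j hj) hi hcard
      rw [← hsucc j hj] at hz1 hz3
      exact ⟨z, hz1, hz2, by linarith⟩
  obtain ⟨y, hxy, hy, hle⟩ := key B le_rfl
  have hyx : y = x B := eq_of_kle_of_card_le hxy
    (by rw [hcardx B le_rfl, hBdef]; exact card_supp_le_of_feasible hy)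
  rw [hyx] at hle
  simp only [sdiff_self, Finset.bot_eq_empty, Finset.card_empty, Nat.cast_zero, zero_mul,
    add_zero] at hle
  have hDM : (1 - ε) * D = 2 * ε * M := by rw [hD]; field_simp
  have hB0 : (0 : ℝ) ≤ B := Nat.cast_nonneg B
  have hden : 0 < 3 - 3*ε + 2*ε*(B : ℝ) := by nlinarith [mul_nonneg hε0.le hB0]
  have h1 : (1 - ε) * f o ≤ (3 - 3*ε + 2*ε*(B : ℝ)) * M := by
    have := mul_le_mul_of_nonneg_left hle hpos.le
    have h : (1 - ε) * (B * D) = B * (2 * ε * M) := by rw [← hDM]; ring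
    rw [← hMdef, mul_add, h] at this
    linarith
  have h2 := (hAS.2.2.2 o).2
  have h3 := (hAS.2.2.2 (x B)).1
  rw [ge_iff_le, div_mul_eq_mul_div, div_le_iff₀ (by positivity)]
  calc (1 - ε)^2 * F o ≤ (1 - ε)^2 * ((1 + ε) * f o) := by gcongr
    _ = (1 - ε) * (1 + ε) * ((1 - ε) * f o) := by ring
    _ ≤ (1 - ε) * (1 + ε) * ((3 - 3*ε + 2*ε*(B : ℝ)) * M) := by gcongr
    _ = (3 - 3*ε + 2*ε*(B : ℝ)) * (1 + ε) * ((1 - ε) * M) := by ring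
    _ ≤ (3 - 3*ε + 2*ε*(B : ℝ)) * (1 + ε) * F (x B) := by gcongr
    _ = F (x B) * ((3 - 3*ε + 2*ε*(B : ℝ)) * (1 + ε)) := by ring
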